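/- (Unbiasedness of random Fourier features.) Let p be a probability density on ℝᵈ and σ_f > 0, and let κ : ℝᵈ → ℝ satisfy κ(δ) = σ_f² ∫_{ℝᵈ} p(ω) cos(⟨ω, δ⟩) dω for all δ. Let ω be a random vector in ℝᵈ with density p and let b be uniformly distributed on [0, 2π], independent of ω. Then for all x, x' ∈ ℝᵈ: E[ 2σ_f² cos(⟨ω, x⟩ + b) · cos(⟨ω, x'⟩ + b) ] = κ(x − x'). -/

import Mathlib

open MeasureTheory ProbabilityTheory Matrix Real

/-!
By independence the law of `(W, b)` is the product of the two laws, so Fubini reduces the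
expectation to an iterated integral with the phase `b` inside. For fixed `W`, the identity
`2 cos (u + t) cos (v + t) = cos (u - v) + cos (u + v + 2 t)` shows that averaging over a uniform
phase leaves only `cos (u - v)`, since the second term runs over whole periods
(`integral_uniform_phase`). With `u = ⟨W, x⟩` and `v = ⟨W, x'⟩`, what remains is
`σ_f² E[cos ⟨W, x - x'⟩]`, which the density `p` turns into the integral defining `κ (x - x')`.
-/

lemma integral_uniform_phase (u v : ℝ) :
    ∫ t, 2 * Real.cos (u + t) * Real.cos (v + t) ∂((ENNReal.ofReal (2 * Real.pi))⁻¹ •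
      (volume : Measure ℝ).restrict (Set.Icc 0 (2 * Real.pi))) = Real.cos (u - v) := by
  have hpi : 0 < 2 * Real.pi := Real.two_pi_pos
  have hid : ∀ t : ℝ, 2 * Real.cos (u + t) * Real.cos (v + t)
      = Real.cos (u - v) + Real.cos (2 * t + (u + v)) := by
    intro t
    rw [Real.two_mul_cos_mul_cos]
    congr 2 <;> ring
  have hzero : ∫ t in (0 : ℝ)..(2 * Real.pi), Real.cos (2 * t + (u + v)) = 0 := by
    rw [intervalIntegral.integral_comp_mul_add _ two_ne_zero, integral_cos,
      show 2 * (2 * Real.pi) + (u + v) = (u + v) + (2 : ℕ) * (2 * Real.pi) by push_cast; ring,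
      Real.sin_add_nat_mul_two_pi]
    simp
  rw [integral_smul_measure, integral_Icc_eq_integral_Ioc,
    ← intervalIntegral.integral_of_le hpi.le]
  simp_rw [hid]
  rw [intervalIntegral.integral_add (by simp)
    (Continuous.intervalIntegrable (by fun_prop) _ _), hzero, intervalIntegral.integral_const,
    ENNReal.toReal_inv, ENNReal.toReal_ofReal hpi.le]
  simp only [smul_eq_mul, sub_zero, add_zero]
  field_simp

/-- Unbiasedness of random Fourier features: if `κ(δ) = σ_f² ∫ p(ω) cos⟨ω, δ⟩ dω`, `W` has
density `p`, and `b` is uniform on `[0, 2π]` independent of `W`, then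
`E[2σ_f² cos(⟨W, x⟩ + b) cos(⟨W, x'⟩ + b)] = κ(x − x')`. -/
theorem stmt7 {Ω : Type*} [MeasurableSpace Ω] (P : Measure Ω) [IsProbabilityMeasure P]
    (d : ℕ) (p : (Fin d → ℝ) → ℝ) (hpm : Measurable p) (hp0 : ∀ ω, 0 ≤ p ω)
    (hp1 : ∫ ω : Fin d → ℝ, p ω = 1)
    (σf : ℝ) (hσf : 0 < σf) (κ : (Fin d → ℝ) → ℝ)
    (hκ : ∀ δ : Fin d → ℝ, κ δ = σf ^ 2 * ∫ ω : Fin d → ℝ, p ω * Real.cos (ω ⬝ᵥ δ))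
    (W : Ω → Fin d → ℝ) (b : Ω → ℝ) (hW : Measurable W) (hb : Measurable b)
    (hWlaw : P.map W = volume.withDensity (fun ω => ENNReal.ofReal (p ω)))
    (hblaw : P.map b = (ENNReal.ofReal (2 * Real.pi))⁻¹ •
      volume.restrict (Set.Icc 0 (2 * Real.pi)))
    (hindep : IndepFun W b P)
    (x x' : Fin d → ℝ) :
    ∫ ωb, 2 * σf ^ 2 * Real.cos (W ωb ⬝ᵥ x + b ωb) * Real.cos (W ωb ⬝ᵥ x' + b ωb) ∂P
      = κ (x - x') := by
  have hpair : P.map (fun a => (W a, b a)) = (P.map W).prod (P.map b) :=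
    (indepFun_iff_map_prod_eq_prod_map_map hW.aemeasurable hb.aemeasurable).1 hindep
  have : IsProbabilityMeasure (P.map W) := Measure.isProbabilityMeasure_map hW.aemeasurable
  have : IsProbabilityMeasure (P.map b) := Measure.isProbabilityMeasure_map hb.aemeasurable
  let F : (Fin d → ℝ) × ℝ → ℝ := fun z =>
    2 * σf ^ 2 * Real.cos (z.1 ⬝ᵥ x + z.2) * Real.cos (z.1 ⬝ᵥ x' + z.2)
  have hF : Continuous F := by
    simp only [F, dotProduct]
    fun_prop
  have hFint : Integrable F ((P.map W).prod (P.map b)) := by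
    refine Integrable.of_bound hF.aestronglyMeasurable (2 * σf ^ 2) (.of_forall fun z => ?_)
    simp only [F, norm_mul, Real.norm_eq_abs, mul_assoc]
    rw [abs_of_pos (two_pos : (0 : ℝ) < 2), abs_of_nonneg (sq_nonneg σf)]
    have h := mul_le_one₀ (Real.abs_cos_le_one (z.1 ⬝ᵥ x + z.2)) (abs_nonneg _)
      (Real.abs_cos_le_one (z.1 ⬝ᵥ x' + z.2))
    nlinarith [sq_nonneg σf]
  have hinner : ∀ w : Fin d → ℝ,
      ∫ t, F (w, t) ∂(P.map b) = σf ^ 2 * Real.cos (w ⬝ᵥ (x - x')) := by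
    intro w
    rw [dotProduct_sub, ← integral_uniform_phase, ← integral_const_mul, hblaw]
    congr 1 with t
    simp only [F]
    ring
  calc ∫ a, F (W a, b a) ∂P
      = ∫ z, F z ∂(P.map (fun a => (W a, b a))) :=
        (integral_map (hW.prodMk hb).aemeasurable hF.aestronglyMeasurable).symm
    _ = ∫ w, σf ^ 2 * Real.cos (w ⬝ᵥ (x - x')) ∂(P.map W) := by
        rw [hpair, integral_prod F hFint]
        simp_rw [hinner]
    _ = κ (x - x') := by
        rw [integral_const_mul, hκ, hWlaw,
          integral_withDensity_eq_integral_toReal_smul hpm.ennreal_ofReal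
            (.of_forall fun _ => ENNReal.ofReal_lt_top)]
        simp only [ENNReal.toReal_ofReal (hp0 _), smul_eq_mul]
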